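/- For general points: ℓ(L(2e+8, 2e−2, 6^{2e})) = 44 − 20e for 1 ≤ e ≤ 2 (virtual dimension −20e + 43); ℓ(L(10, 0, 6^3)) = 5 (virtual dimension 2); and ℓ(L(14, 4, 6^5)) = 5 (virtual dimension 4); in particular all these systems are special. -/

import Mathlib

open MvPolynomial

/-- The iterated partial derivative corresponding to the multi-index `ν`. -/
noncomputable def mderiv (ν : Fin 3 → ℕ) :
    MvPolynomial (Fin 3) ℂ →ₗ[ℂ] MvPolynomial (Fin 3) ℂ :=
  ((pderiv (R := ℂ) (0 : Fin 3)).toLinearMap ^ ν 0) ∘ₗ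
  ((pderiv (R := ℂ) (1 : Fin 3)).toLinearMap ^ ν 1) ∘ₗ
  ((pderiv (R := ℂ) (2 : Fin 3)).toLinearMap ^ ν 2)

/-- The linear system `L(d; m)` of homogeneous forms of degree `d` in three variables
all of whose partial derivatives of order `< m i` vanish at the point `p i`,
i.e. plane curves of degree `d` with multiplicity at least `m i` at `p i`. -/
noncomputable def linSys {k : ℕ} (p : Fin k → Fin 3 → ℂ) (d : ℕ) (m : Fin k → ℕ) :
    Submodule ℂ (MvPolynomial (Fin 3) ℂ) :=
  (homogeneousSubmodule (Fin 3) ℂ d) ⊓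
    ⨅ (i : Fin k), ⨅ (ν : Fin 3 → ℕ), ⨅ (_ : ν 0 + ν 1 + ν 2 < m i),
      LinearMap.ker ((aeval (p i)).toLinearMap ∘ₗ mderiv ν)

/-- The projective dimension `ℓ` of the linear system (`-1` means empty). -/
noncomputable def projDim {k : ℕ} (p : Fin k → Fin 3 → ℂ) (d : ℕ) (m : Fin k → ℕ) : ℤ :=
  (Module.finrank ℂ (linSys p d m) : ℤ) - 1

/-- The virtual dimension `v = d(d+3)/2 - ∑ mᵢ(mᵢ+1)/2`. -/
def virtDim {k : ℕ} (d : ℕ) (m : Fin k → ℕ) : ℤ :=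
  ((d : ℤ) * (d + 3)) / 2 - ∑ i : Fin k, ((m i : ℤ) * (m i + 1)) / 2

/-- The quasi-homogeneous multiplicity vector `(m₀, 6, …, 6)` on `n + 1` points. -/
def qh (n m0 : ℕ) : Fin (n + 1) → ℕ := fun i => if i = 0 then m0 else 6

/-- A property `Q` of configurations of `k` points of `ℙ²` (given by nonzero homogeneous
coordinate vectors) holds for points in general position: there is a nonzero polynomial
in the coordinates such that `Q` holds whenever it does not vanish. -/
def Generically (k : ℕ) (Q : (Fin k → Fin 3 → ℂ) → Prop) : Prop :=
  ∃ P : MvPolynomial (Fin k × Fin 3) ℂ, P ≠ 0 ∧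
    ∀ p : Fin k → Fin 3 → ℂ, (∀ i, p i ≠ 0) →
      eval (fun x => p x.1 x.2) P ≠ 0 → Q p

/-!
Each of the four systems contains a system `M` plus twice one or several lines or conics that exist
through any configuration of points: `L(8; 0, 4^2)` plus twice a line, `L(8; 0, 4^4)` plus twice a
conic, `L(4; 0, 2^3)` plus twice the three sides of a triangle, `L(10; 4^6)` plus twice a conic. The
virtual dimension of `M` is the asserted dimension and exceeds that of the given system, which gives
the lower bound for all configurations. For the upper bound, the dimension is that of the kernel of
a matrix depending polynomially on the points, so its value at one configuration bounds its value at
general ones. For points placed suitably on lines and conics one splits off these curves one at a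
time: by Bézout, restriction to a rational curve of degree `e` of forms of degree `d` with
multiplicities `m i` has an image of dimension at most `max 0 (d * e + 1 - ∑ m i)`, the sum being
over the points on the curve, and its kernel consists of the multiples of the equation of the curve.
-/

section Taylor

variable {σ R : Type*} [CommRing R]

theorem derivation_aeval [Fintype σ] {A M : Type*} [CommRing A] [Algebra R A] [AddCommGroup M]
    [Module A M] [Module R M] (D : Derivation R A M) (φ : σ → A) (f : MvPolynomial σ R) :
    D (aeval φ f) = ∑ i, aeval φ (pderiv i f) • D (φ i) := by
  classical
  induction f using MvPolynomial.induction_on with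
  | C a => simp
  | add f g hf hg => simp [hf, hg, add_smul, Finset.sum_add_distrib]
  | mul_X f j hf =>
    simp [hf, add_smul, Finset.sum_add_distrib, Finset.smul_sum, smul_smul, pderiv_X,
      Pi.single_apply, apply_ite, ite_smul, mul_comm, add_comm]

/-- The Taylor expansion of `f` at `p`, with the terms sorted by degree: it is `f (p + T • X)`,
a polynomial in `T` whose coefficients are polynomials in `X`. -/
noncomputable def taylorAt (p : σ → R) : MvPolynomial σ R →ₐ[R] Polynomial (MvPolynomial σ R) :=
  aeval fun i => Polynomial.C (C (p i)) + Polynomial.X * Polynomial.C (X i)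

theorem taylorAt_X (p : σ → R) (i : σ) :
    taylorAt p (X i) = Polynomial.C (C (p i)) + Polynomial.X * Polynomial.C (X i) :=
  aeval_X _ i

theorem coeff_zero_taylorAt (p : σ → R) (f : MvPolynomial σ R) :
    (taylorAt p f).coeff 0 = C (aeval p f) := by
  have h : ((Polynomial.aeval (0 : MvPolynomial σ R)).restrictScalars R).comp (taylorAt p) =
      (Algebra.ofId R _).comp (aeval p) := by
    ext i
    simp [taylorAt_X, Algebra.ofId_apply, algebraMap_eq]
  simpa [Polynomial.coeff_zero_eq_aeval_zero, Algebra.ofId_apply, algebraMap_eq] using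
    DFunLike.congr_fun h f

theorem derivative_taylorAt [Fintype σ] (p : σ → R) (f : MvPolynomial σ R) :
    Polynomial.derivative (taylorAt p f) =
      ∑ i, taylorAt p (pderiv i f) * Polynomial.C (X i) := by
  have h := derivation_aeval (Polynomial.derivative'.restrictScalars R)
    (fun i => Polynomial.C (C (p i)) + Polynomial.X * Polynomial.C (X i)) f
  simpa [taylorAt] using h

theorem pderiv_coeff_succ_taylorAt [Finite σ] (p : σ → R) (i : σ) (f : MvPolynomial σ R) (n : ℕ) :
    pderiv i ((taylorAt p f).coeff (n + 1)) = (taylorAt p (pderiv i f)).coeff n := by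
  classical
  have := Fintype.ofFinite σ
  let D := PolynomialModule.equivPolynomialSelf.compDer (pderiv (R := R) i).mapCoeffs
  have coeff_D (g : Polynomial (MvPolynomial σ R)) (n : ℕ) :
      (D g).coeff n = pderiv i (g.coeff n) := rfl
  have hX (j : σ) : D (Polynomial.C (C (p j)) + Polynomial.X * Polynomial.C (X j)) =
      if j = i then Polynomial.X else 0 := by
    ext1 n
    rw [coeff_D]
    split_ifs with hj <;> rcases n with _ | _ | n <;> simp [Polynomial.coeff_X, hj]
  have h : D (taylorAt p f) = taylorAt p (pderiv i f) * Polynomial.X := by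
    simp only [taylorAt, derivation_aeval, hX, smul_eq_mul, mul_ite, mul_zero,
      Finset.sum_ite_eq', Finset.mem_univ, if_true]
  rw [← coeff_D, h, Polynomial.coeff_mul_X]

/-- `f` has multiplicity at least `m` at `p`: the terms of degree `< m` of its Taylor expansion at
`p` vanish. -/
def VanishesToOrder (p : σ → R) (m : ℕ) (f : MvPolynomial σ R) : Prop :=
  Polynomial.X ^ m ∣ taylorAt p f

namespace VanishesToOrder

variable {p : σ → R} {m n : ℕ} {f g : MvPolynomial σ R}

theorem mono (h : VanishesToOrder p m f) (hnm : n ≤ m) : VanishesToOrder p n f :=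
  (pow_dvd_pow _ hnm).trans h

theorem mul (hf : VanishesToOrder p m f) (hg : VanishesToOrder p n g) :
    VanishesToOrder p (m + n) (f * g) := by
  simpa only [VanishesToOrder, map_mul, pow_add] using mul_dvd_mul hf hg

theorem pow (hf : VanishesToOrder p m f) (n : ℕ) : VanishesToOrder p (n * m) (f ^ n) := by
  simpa only [VanishesToOrder, map_pow, pow_mul'] using pow_dvd_pow_of_dvd hf n

theorem of_mul_right [IsDomain R] (hg : ¬ VanishesToOrder p (n + 1) g)
    (h : VanishesToOrder p m (f * g)) : VanishesToOrder p (m - n) f := by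
  rw [VanishesToOrder, pow_dvd_iff_le_emultiplicity, not_le, Nat.cast_succ] at hg
  rw [VanishesToOrder, map_mul, pow_dvd_iff_le_emultiplicity,
    emultiplicity_mul Polynomial.prime_X] at h
  rw [VanishesToOrder, pow_dvd_iff_le_emultiplicity, ENat.natCast_sub, tsub_le_iff_right]
  exact h.trans (by gcongr; exact Order.le_of_lt_add_one hg)

end VanishesToOrder

variable {p : σ → R} {m : ℕ} {f : MvPolynomial σ R}

theorem vanishesToOrder_zero : VanishesToOrder p 0 f := by
  simp [VanishesToOrder]

theorem vanishesToOrder_one_iff : VanishesToOrder p 1 f ↔ aeval p f = 0 := by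
  rw [VanishesToOrder, pow_one, Polynomial.X_dvd_iff, coeff_zero_taylorAt, C_eq_zero]

theorem vanishesToOrder_succ_iff [Finite σ] [IsDomain R] [CharZero R] :
    VanishesToOrder p (m + 1) f ↔ aeval p f = 0 ∧ ∀ i, VanishesToOrder p m (pderiv i f) := by
  have := Fintype.ofFinite σ
  refine ⟨fun h => ⟨vanishesToOrder_one_iff.mp (h.mono (by lia)), fun i => ?_⟩, fun ⟨h₀, h⟩ => ?_⟩
  · refine Polynomial.X_pow_dvd_iff.mpr fun n hn => ?_
    rw [← pderiv_coeff_succ_taylorAt, Polynomial.X_pow_dvd_iff.mp h _ (by lia), map_zero]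
  · refine Polynomial.X_pow_dvd_iff.mpr fun n hn => ?_
    rcases n with _ | n
    · rw [coeff_zero_taylorAt, h₀, C_0]
    · have hd : Polynomial.X ^ m ∣ Polynomial.derivative (taylorAt p f) := by
        rw [derivative_taylorAt]
        exact Finset.dvd_sum fun i _ => (h i).mul_right _
      have hn : (taylorAt p f).coeff (n + 1) * (n + 1) = 0 := by
        rw [← Polynomial.coeff_derivative]
        exact Polynomial.X_pow_dvd_iff.mp hd n (by lia)
      exact (mul_eq_zero.mp hn).resolve_right n.cast_add_one_ne_zero

theorem aeval_smul_of_isHomogeneous {A : Type*} [CommRing A] [Algebra R A] {d : ℕ}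
    (hf : f.IsHomogeneous d) (c : A) (φ : σ → A) :
    aeval (c • φ) f = c ^ d * aeval φ f := by
  simp only [aeval_def, eval₂_eq, Finset.mul_sum]
  refine Finset.sum_congr rfl fun ν hν => ?_
  have hd : ∑ i ∈ ν.support, ν i = d := by
    simpa [Finsupp.degree] using (hf.degree_eq_sum_deg_support hν).symm
  simp only [Pi.smul_apply, smul_eq_mul, mul_pow, Finset.prod_mul_distrib,
    Finset.prod_pow_eq_pow_sum, hd]
  ring

theorem VanishesToOrder.smul [Finite σ] [IsDomain R] [CharZero R] {d : ℕ}
    (h : VanishesToOrder p m f) (hf : f.IsHomogeneous d) (c : R) :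
    VanishesToOrder (c • p) m f := by
  induction m generalizing f d with
  | zero => exact vanishesToOrder_zero
  | succ m ih =>
    rw [vanishesToOrder_succ_iff] at h ⊢
    exact ⟨by rw [aeval_smul_of_isHomogeneous hf, h.1, mul_zero], fun i => ih (h.2 i) hf.pderiv⟩

/-- Substitute the difference quotients of `φ` for the variables. -/
theorem VanishesToOrder.X_sub_C_pow_dvd (φ : σ → Polynomial R) (t : R)
    (h : VanishesToOrder (fun i => (φ i).eval t) m f) :
    (Polynomial.X - Polynomial.C t) ^ m ∣ aeval φ f := by
  have hψ (i : σ) : ∃ ψ, φ i - Polynomial.C ((φ i).eval t) = (Polynomial.X - Polynomial.C t) * ψ :=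
    Polynomial.X_sub_C_dvd_sub_C_eval
  choose ψ hψ using hψ
  let E : Polynomial (MvPolynomial σ R) →+* Polynomial R :=
    Polynomial.eval₂RingHom (aeval ψ : _ →ₐ[R] _).toRingHom (Polynomial.X - Polynomial.C t)
  have hE : E.comp (taylorAt fun i => (φ i).eval t).toRingHom =
      (aeval φ : _ →ₐ[R] _).toRingHom := by
    refine MvPolynomial.ringHom_ext (fun a => ?_) fun i => ?_
    · simp [E]
    · simpa [E, taylorAt_X, mul_comm (ψ i)] using (sub_eq_iff_eq_add'.mp (hψ i)).symm
  have hf : E (taylorAt _ f) = aeval φ f := RingHom.congr_fun hE f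
  have hX : E Polynomial.X = Polynomial.X - Polynomial.C t := by simp [E]
  simpa only [hf, hX, map_pow] using map_dvd E h

theorem VanishesToOrder.of_pderiv [Finite σ] [IsDomain R] [CharZero R] {d : ℕ}
    (hf : f.IsHomogeneous d) (hd : d ≠ 0) (h : ∀ i, VanishesToOrder p (m + 1) (pderiv i f)) :
    VanishesToOrder p (m + 2) f := by
  have := Fintype.ofFinite σ
  refine vanishesToOrder_succ_iff.mpr ⟨?_, h⟩
  have euler := congrArg (aeval p) hf.sum_X_mul_pderiv
  simp only [map_sum, map_mul, (vanishesToOrder_succ_iff.mp (h _)).1, mul_zero,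
    Finset.sum_const_zero, map_nsmul] at euler
  exact (smul_eq_zero.mp euler.symm).resolve_left hd

end Taylor

section MultipleDerivatives

theorem commute_pderiv {σ R : Type*} [CommRing R] (i j : σ) :
    Commute (pderiv (R := R) i).toLinearMap (pderiv (R := R) j).toLinearMap := by
  classical
  have bracket : ⁅pderiv (R := R) i, pderiv (R := R) j⁆ = 0 := by
    refine derivation_ext fun k => ?_
    simp [Derivation.commutator_apply, pderiv_X, Pi.single_apply, apply_ite]
  refine LinearMap.ext fun f => ?_
  simpa [Derivation.commutator_apply, sub_eq_zero] using DFunLike.congr_fun bracket f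

theorem mderiv_pderiv (ν : Fin 3 → ℕ) (i : Fin 3) (f : MvPolynomial (Fin 3) ℂ) :
    mderiv ν (pderiv i f) = mderiv (ν + Pi.single i 1) f := by
  let D (j : Fin 3) := (pderiv (R := ℂ) j).toLinearMap
  have mderiv_eq (ν : Fin 3 → ℕ) :
      mderiv ν = D 0 ^ ν 0 * (D 1 ^ ν 1 * D 2 ^ ν 2) := rfl
  have pow_comm (i j : Fin 3) (n : ℕ) : D i ^ n * D j = D j * D i ^ n :=
    ((commute_pderiv i j).pow_left n).eq
  suffices h : mderiv ν * D i = mderiv (ν + Pi.single i 1) from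
    LinearMap.congr_fun h f
  rw [mderiv_eq, mderiv_eq]
  fin_cases i
  · suffices D 0 ^ ν 0 * (D 1 ^ ν 1 * (D 2 ^ ν 2 * D 0)) =
        D 0 ^ ν 0 * (D 0 * (D 1 ^ ν 1 * D 2 ^ ν 2)) by simpa [pow_succ, mul_assoc]
    rw [pow_comm 2 0, ← mul_assoc (D 1 ^ ν 1), pow_comm 1 0, mul_assoc]
  · simp [pow_succ, mul_assoc, pow_comm 2 1, D]
  · simp [pow_succ, mul_assoc, D]

theorem vanishesToOrder_iff_mderiv {p : Fin 3 → ℂ} {m : ℕ} {f : MvPolynomial (Fin 3) ℂ} :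
    VanishesToOrder p m f ↔
      ∀ ν : Fin 3 → ℕ, ν 0 + ν 1 + ν 2 < m → aeval p (mderiv ν f) = 0 := by
  simp only [← Fin.sum_univ_three]
  induction m generalizing f with
  | zero => simp [vanishesToOrder_zero]
  | succ m ih =>
    simp only [vanishesToOrder_succ_iff, ih, mderiv_pderiv]
    refine ⟨fun ⟨h₀, h⟩ ν hν => ?_, fun h => ⟨h 0 (by simp), fun i ν hν => h _ ?_⟩⟩
    · by_cases hz : ν = 0
      · exact hz ▸ h₀
      obtain ⟨i, hi⟩ := Function.ne_iff.mp hz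
      obtain ⟨μ, rfl⟩ : ∃ μ, ν = μ + Pi.single i 1 :=
        ⟨ν - Pi.single i 1, (tsub_add_cancel_of_le (update_le_iff.mpr
          ⟨Nat.one_le_iff_ne_zero.mpr hi, fun _ _ => Nat.zero_le _⟩)).symm⟩
      exact h i μ (by simpa [Finset.sum_add_distrib] using hν)
    · simpa [Finset.sum_add_distrib] using hν

/-- Euler's identity recovers the lower derivatives from the highest ones. -/
theorem vanishesToOrder_of_top {p : Fin 3 → ℂ} {d m : ℕ} {f : MvPolynomial (Fin 3) ℂ}
    (hf : f.IsHomogeneous d) (hm : m ≤ d + 1)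
    (h : ∀ ν : Fin 3 → ℕ, ν 0 + ν 1 + ν 2 + 1 = m → aeval p (mderiv ν f) = 0) :
    VanishesToOrder p m f := by
  simp only [← Fin.sum_univ_three] at h
  induction m generalizing f d with
  | zero => exact vanishesToOrder_zero
  | succ m ih =>
    rcases m with _ | m
    · exact vanishesToOrder_one_iff.mpr (h 0 (by simp))
    · refine .of_pderiv hf (by lia) fun i => ih hf.pderiv (by lia) fun ν hν => ?_
      rw [mderiv_pderiv]
      exact h _ (by simp [Finset.sum_add_distrib, ← hν])

end MultipleDerivatives

section DimensionCount

theorem multichoose_three (n : ℕ) : Nat.multichoose 3 n = (n + 2).choose 2 := by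
  rw [Nat.multichoose_eq, Nat.choose_symm_of_eq_add (show 3 + n - 1 = n + 2 by lia)]
  congr 1
  lia

theorem finrank_homogeneousSubmodule (σ R : Type*) [Fintype σ] [CommRing R] [Nontrivial R]
    (d : ℕ) :
    Module.finrank R (homogeneousSubmodule σ R d) = (Fintype.card σ).multichoose d := by
  classical
  have supp : {ν : σ →₀ ℕ | ν.degree = d} =
      (Finset.finsuppAntidiag (Finset.univ : Finset σ) d : Set (σ →₀ ℕ)) := by
    ext ν
    simp [Finsupp.degree_eq_sum]
  rw [homogeneousSubmodule_eq_finsupp_supported,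
    (AddMonoidAlgebra.supportedEquivFinsupp _).finrank_eq, supp, Module.finrank_finsupp_self]
  simp [Finset.card_finsuppAntidiag_nat_eq_multichoose]

instance finite_homogeneousSubmodule (d : ℕ) :
    Module.Finite ℂ (homogeneousSubmodule (Fin 3) ℂ d) :=
  Module.Finite.iff_fg.mpr (homogeneousSubmodule_fg (Fin 3) ℂ d)

variable {k : ℕ} {p : Fin k → Fin 3 → ℂ} {d e : ℕ} {m μ : Fin k → ℕ}

theorem mem_linSys_iff {f : MvPolynomial (Fin 3) ℂ} :
    f ∈ linSys p d m ↔ f.IsHomogeneous d ∧ ∀ i, VanishesToOrder (p i) (m i) f := by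
  simp [linSys, vanishesToOrder_iff_mderiv, Submodule.mem_iInf]

instance finite_linSys : Module.Finite ℂ (linSys p d m) :=
  Submodule.finiteDimensional_of_le (inf_le_left : _ ≤ homogeneousSubmodule (Fin 3) ℂ d)

/-- The multi-indices of order `m - 1`, of which there are none for `m = 0`. -/
noncomputable def topIndices : ℕ → Finset (Fin 3 →₀ ℕ)
  | 0 => ∅
  | m + 1 => Finset.finsuppAntidiag Finset.univ m

theorem mem_topIndices {m : ℕ} {ν : Fin 3 →₀ ℕ} :
    ν ∈ topIndices m ↔ ν 0 + ν 1 + ν 2 + 1 = m := by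
  cases m <;> simp [topIndices, Fin.sum_univ_three]

theorem card_topIndices (m : ℕ) : (topIndices m).card = (m + 1).choose 2 := by
  cases m with
  | zero => rfl
  | succ m =>
    simp [topIndices, Finset.card_finsuppAntidiag_nat_eq_multichoose, multichoose_three]

variable (p d m) in
/-- The linear conditions cutting `linSys p d m` out of the forms of degree `d`: the values at
`p i` of the partial derivatives of order `m i - 1`. -/
noncomputable def topDerivs :
    homogeneousSubmodule (Fin 3) ℂ d →ₗ[ℂ] ((Σ i, topIndices (m i)) → ℂ) :=
  LinearMap.pi fun j => ((aeval (p j.1)).toLinearMap ∘ₗ mderiv j.2.1) ∘ₗ Submodule.subtype _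

theorem map_ker_topDerivs (hm : ∀ i, m i ≤ d + 1) :
    (LinearMap.ker (topDerivs p d m)).map (Submodule.subtype _) = linSys p d m := by
  ext f
  simp only [Submodule.mem_map, LinearMap.mem_ker, mem_linSys_iff]
  constructor
  · rintro ⟨⟨f, hf⟩, hker, rfl⟩
    exact ⟨hf, fun i => vanishesToOrder_of_top hf (hm i) fun ν hν =>
      congrFun hker ⟨i, Finsupp.equivFunOnFinite.symm ν, mem_topIndices.mpr hν⟩⟩
  · rintro ⟨hf, hp⟩
    refine ⟨⟨f, hf⟩, funext fun j => vanishesToOrder_iff_mderiv.mp (hp j.1) _ ?_, rfl⟩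
    have := mem_topIndices.mp j.2.2
    lia

theorem projDim_eq_sub_finrank_range_topDerivs (hm : ∀ i, m i ≤ d + 1) :
    projDim p d m =
      (d + 2).choose 2 - 1 - Module.finrank ℂ (LinearMap.range (topDerivs p d m)) := by
  have rank_nullity := (topDerivs p d m).finrank_range_add_finrank_ker
  rw [finrank_homogeneousSubmodule, Fintype.card_fin, multichoose_three] at rank_nullity
  rw [projDim, ← map_ker_topDerivs hm, Submodule.finrank_map_subtype_eq, ← rank_nullity]
  push_cast
  ring

theorem virtDim_eq_choose (d : ℕ) (m : Fin k → ℕ) :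
    virtDim d m = (d + 2).choose 2 - 1 - ∑ i, ((m i + 1).choose 2 : ℤ) := by
  have triangle (n : ℕ) : ((n : ℤ) * (n + 1)) / 2 = (n + 1).choose 2 := by
    rw [Nat.choose_two_right, mul_comm]
    norm_cast
  have forms : (d : ℤ) * (d + 3) / 2 = (d + 2).choose 2 - 1 := by
    rw [← triangle (d + 1), show (d : ℤ) * (d + 3) = ↑(d + 1) * (↑(d + 1) + 1) + -1 * 2 by
      push_cast; ring, Int.add_mul_ediv_right _ _ two_ne_zero, sub_eq_add_neg]
  simp only [virtDim, triangle, forms]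

theorem virtDim_le_projDim (p : Fin k → Fin 3 → ℂ) (hm : ∀ i, m i ≤ d + 1) :
    virtDim d m ≤ projDim p d m := by
  have h : Module.finrank ℂ (LinearMap.range (topDerivs p d m)) ≤ ∑ i, (m i + 1).choose 2 := by
    refine (Submodule.finrank_le _).trans_eq ?_
    simp [card_topIndices]
  rw [virtDim_eq_choose, projDim_eq_sub_finrank_range_topDerivs hm]
  gcongr
  exact_mod_cast h

theorem projDim_le_virtDim_zero (p : Fin k → Fin 3 → ℂ) (d : ℕ) (m : Fin k → ℕ) :
    projDim p d m ≤ virtDim d (0 : Fin k → ℕ) := by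
  have h : Module.finrank ℂ (linSys p d m) ≤ (d + 2).choose 2 :=
    (Submodule.finrank_mono inf_le_left).trans_eq (by
      rw [finrank_homogeneousSubmodule, Fintype.card_fin, multichoose_three])
  simpa [virtDim_eq_choose, projDim] using h

theorem projDim_le_projDim_add_nsmul (h : 0 ≤ projDim p e μ) (n : ℕ) :
    projDim p d m ≤ projDim p (d + n * e) (m + n • μ) := by
  have : Nontrivial (linSys p e μ) := Module.nontrivial_of_finrank_pos (R := ℂ) (by
    rw [projDim] at h
    lia)
  obtain ⟨q, hq₀⟩ := exists_ne (0 : linSys p e μ)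
  have hq := mem_linSys_iff.mp q.2
  have maps : (linSys p d m).map (LinearMap.mulRight ℂ (q.1 ^ n)) ≤
      linSys p (d + n * e) (m + n • μ) := by
    rintro _ ⟨f, hf, rfl⟩
    rw [SetLike.mem_coe, mem_linSys_iff] at hf
    exact mem_linSys_iff.mpr ⟨hf.1.mul (mul_comm e n ▸ hq.1.pow n),
      fun i => (hf.2 i).mul ((hq.2 i).pow n)⟩
  have inj : Function.Injective (LinearMap.mulRight ℂ (q.1 ^ n)) := fun _ _ h =>
    mul_right_cancel₀ (pow_ne_zero n (Subtype.coe_ne_coe.mpr hq₀)) h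
  have := Submodule.finrank_mono maps
  rw [← (Submodule.equivMapOfInjective _ inj (linSys p d m)).finrank_eq] at this
  simpa only [projDim, sub_le_sub_iff_right, Nat.cast_le] using this

end DimensionCount

section Semicontinuity

variable {K ι κ σ : Type*} [Field K] [Fintype κ]

theorem exists_mul_mul_eq_one_of_rank [Fintype ι] (A : Matrix ι κ K) :
    ∃ (U : Matrix (Fin A.rank) ι K) (V : Matrix κ (Fin A.rank) K), U * A * V = 1 := by
  classical
  let b : Module.Basis (Fin A.rank) K (LinearMap.range A.mulVecLin) := Module.finBasis K _
  choose v hv using fun i => (b i).2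
  obtain ⟨u, hu⟩ := ((LinearMap.range A.mulVecLin).subtype ∘ₗ
    b.equivFun.symm.toLinearMap).exists_leftInverse_of_injective
      (LinearMap.ker_eq_bot.mpr (Subtype.val_injective.comp b.equivFun.symm.injective))
  have hub (i : Fin A.rank) : u (b i) = Pi.single i 1 := by
    simpa [Pi.single_apply, ite_smul] using LinearMap.congr_fun hu (Pi.single i 1)
  refine ⟨LinearMap.toMatrix' u, (Matrix.of v).transpose, Matrix.ext_of_mulVec_single fun i => ?_⟩
  rw [← Matrix.mulVec_mulVec, ← Matrix.mulVec_mulVec, Matrix.mulVec_single_one,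
    LinearMap.toMatrix'_mulVec, Matrix.one_mulVec, ← hub, ← hv]
  rfl

theorem exists_forall_rank_map_eval_le [Finite ι] (A : Matrix ι κ (MvPolynomial σ K))
    (q : σ → K) :
    ∃ P : MvPolynomial σ K, eval q P ≠ 0 ∧
      ∀ p, eval p P ≠ 0 → (A.map (eval q)).rank ≤ (A.map (eval p)).rank := by
  have := Fintype.ofFinite ι
  obtain ⟨U, V, hUV⟩ := exists_mul_mul_eq_one_of_rank (A.map (eval q))
  let P := ((U.map C : Matrix _ ι (MvPolynomial σ K)) * A *
    (V.map C : Matrix κ _ (MvPolynomial σ K))).det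
  have eval_P (p : σ → K) : eval p P = (U * A.map (eval p) * V).det := by
    simp only [P, RingHom.map_det, RingHom.mapMatrix_apply, Matrix.map_mul, Matrix.map_map,
      Function.comp_def, eval_C, Matrix.map_id']
  refine ⟨P, by simp [eval_P, hUV], fun p hp => ?_⟩
  calc (A.map (eval q)).rank
      = (U * A.map (eval p) * V).rank := by
        rw [Matrix.rank_of_det_ne_zero (eval_P p ▸ hp), Fintype.card_fin]
    _ ≤ (U * A.map (eval p)).rank := Matrix.rank_mul_le_left _ _
    _ ≤ (A.map (eval p)).rank := Matrix.rank_mul_le_right _ _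

/-- The conditions imposed by the points form a matrix whose entries are polynomials in the
coordinates of the points, so their number can only drop under specialisation. -/
theorem generically_projDim_le {k d : ℕ} {m : Fin k → ℕ} (hm : ∀ i, m i ≤ d + 1)
    (q : Fin k → Fin 3 → ℂ) : Generically k fun p => projDim p d m ≤ projDim q d m := by
  classical
  let b := Module.finBasis ℂ (homogeneousSubmodule (Fin 3) ℂ d)
  let A : Matrix (Σ i, topIndices (m i)) _ (MvPolynomial (Fin k × Fin 3) ℂ) :=
    Matrix.of fun j l => rename (Prod.mk j.1) (mderiv j.2.1 (b l))
  have rank_A (p : Fin k → Fin 3 → ℂ) : (A.map (eval fun x => p x.1 x.2)).rank =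
      Module.finrank ℂ (LinearMap.range (topDerivs p d m)) := by
    rw [← Matrix.toLin_toMatrix b (Pi.basisFun ℂ _) (topDerivs p d m),
      ← Matrix.rank_eq_finrank_range_toLin]
    congr 1
    ext j l
    simp [A, eval_rename, LinearMap.toMatrix_apply, topDerivs, aeval_eq_eval, Function.comp_def]
  obtain ⟨P, hq, hP⟩ := exists_forall_rank_map_eval_le A fun x => q x.1 x.2
  refine ⟨P, fun h => hq (by rw [h, map_zero]), fun p _ hp => ?_⟩
  have h := hP _ hp
  rw [rank_A, rank_A] at h
  simp only [projDim_eq_sub_finrank_range_topDerivs hm]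
  gcongr

end Semicontinuity

section ParametrizedCurves

/-- `φ` is a parametrisation, in affine coordinates, of the hypersurface `Q = 0` of degree `e`: its
components have degree at most `e`, and the forms vanishing along `φ` are the multiples of `Q`. -/
structure IsParametrization {σ R : Type*} [CommRing R] (e : ℕ) (Q : MvPolynomial σ R)
    (φ : σ → Polynomial R) : Prop where
  isHomogeneous : Q.IsHomogeneous e
  natDegree_le : ∀ i, (φ i).natDegree ≤ e
  dvd : ∀ {d : ℕ} {f : MvPolynomial σ R}, f.IsHomogeneous d → aeval φ f = 0 → Q ∣ f

/-- By assumption `s ∘ aeval φ` is the identity modulo `Q` on forms of degree `d`. -/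
theorem dvd_of_aeval_eq_zero {R A : Type*} [CommRing R] [CommRing A] [Algebra R A] {d : ℕ}
    {f Q : MvPolynomial (Fin 3) R} {φ : Fin 3 → A} (hf : f.IsHomogeneous d)
    (s : A →ₗ[R] MvPolynomial (Fin 3) R)
    (h : ∀ a b c, a + b + c = d →
      Q ∣ X 0 ^ a * X 1 ^ b * X 2 ^ c - s (φ 0 ^ a * φ 1 ^ b * φ 2 ^ c))
    (h₀ : aeval φ f = 0) : Q ∣ f := by
  let δ := LinearMap.id - s ∘ₗ (aeval φ).toLinearMap
  have hδ : δ f = f := by simp [δ, h₀]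
  rw [← hδ, f.as_sum, map_sum]
  refine Finset.dvd_sum fun ν hν => ?_
  have monomial_eq_smul : monomial ν (coeff ν f) =
      coeff ν f • (X 0 ^ ν 0 * X 1 ^ ν 1 * X 2 ^ ν 2) := by
    rw [monomial_eq, Finsupp.prod_fintype _ _ (by simp), Fin.prod_univ_three, smul_eq_C_mul]
  have degree_eq : ν 0 + ν 1 + ν 2 = d := by
    have := hf.degree_eq_sum_deg_support hν
    rwa [← Finsupp.degree_apply, Finsupp.degree_eq_sum, Fin.sum_univ_three, eq_comm] at this
  rw [monomial_eq_smul, map_smul, smul_eq_C_mul]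
  refine Dvd.dvd.mul_left ?_ _
  simpa [δ] using h _ _ _ degree_eq

theorem constr_basisMonomials_X_pow {R M : Type*} [CommRing R] [AddCommGroup M] [Module R M]
    (b : ℕ → M) (n : ℕ) : (Polynomial.basisMonomials R).constr R b (Polynomial.X ^ n) = b n := by
  rw [← Polynomial.monomial_one_right_eq_X_pow]
  simpa only [Polynomial.coe_basisMonomials] using (Polynomial.basisMonomials R).constr_basis R b n

theorem isParametrization_conic (R : Type*) [CommRing R] :
    IsParametrization 2 (X 0 * X 2 - X 1 ^ 2 : MvPolynomial (Fin 3) R)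
      ![1, Polynomial.X, Polynomial.X ^ 2] where
  isHomogeneous := ((isHomogeneous_X R 0).mul (isHomogeneous_X R 2)).sub (isHomogeneous_X_pow 1 2)
  natDegree_le i := by
    fin_cases i
    · simp
    · simpa using Polynomial.natDegree_X_le.trans one_le_two
    · simpa using Polynomial.natDegree_X_pow_le 2
  dvd {d f} hf := by
    refine dvd_of_aeval_eq_zero hf ((Polynomial.basisMonomials R).constr R fun j =>
      if j ≤ d then X 0 ^ (d - j) * X 1 ^ j else X 1 ^ (2 * d - j) * X 2 ^ (j - d))
      fun a b c habc => ?_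
    have key (n : ℕ) := sub_dvd_pow_sub_pow (X 0 * X 2 : MvPolynomial (Fin 3) R) (X 1 ^ 2) n
    set φ : Fin 3 → Polynomial R := ![1, Polynomial.X, Polynomial.X ^ 2] with hφ
    rw [show φ 0 ^ a * φ 1 ^ b * φ 2 ^ c = Polynomial.X ^ (b + 2 * c) by
      simp [hφ, pow_add, pow_mul], constr_basisMonomials_X_pow]
    split_ifs with hj
    · obtain ⟨u, rfl⟩ : ∃ u, a = u + c := ⟨a - c, by lia⟩
      rw [show d - (b + 2 * c) = u by lia]
      convert (key c).mul_left (X 0 ^ u * X 1 ^ b) using 1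
      ring
    · obtain ⟨u, rfl⟩ : ∃ u, c = u + a := ⟨c - a, by lia⟩
      rw [show 2 * d - (b + 2 * (u + a)) = b + 2 * a by lia,
        show b + 2 * (u + a) - d = u by lia]
      convert (key a).mul_left (X 1 ^ b * X 2 ^ u) using 1
      ring

theorem isParametrization_line (R : Type*) [CommRing R] :
    IsParametrization 1 (X 2 : MvPolynomial (Fin 3) R) ![1, Polynomial.X, 0] where
  isHomogeneous := isHomogeneous_X R 2
  natDegree_le i := by fin_cases i <;> simp [Polynomial.natDegree_X_le]
  dvd {d f} hf := by
    refine dvd_of_aeval_eq_zero hf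
      ((Polynomial.basisMonomials R).constr R fun j => X 0 ^ (d - j) * X 1 ^ j)
      fun a b c habc => ?_
    rcases c with _ | c
    · simp [constr_basisMonomials_X_pow, ← habc]
    · simp [pow_succ, ← mul_assoc]

theorem IsParametrization.linearChange {σ K : Type*} [Field K] {e : ℕ} {Q : MvPolynomial σ K}
    {φ φ' : σ → Polynomial K} (h : IsParametrization e Q φ) {a l : σ → MvPolynomial σ K}
    (ha : ∀ i, (a i).IsHomogeneous 1) (hl : ∀ i, (l i).IsHomogeneous 1) {c : K} (hc : c ≠ 0)
    (hal : ∀ i, aeval l (a i) = C c * X i) (hφ' : ∀ i, φ' i = aeval φ (a i)) :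
    IsParametrization e (aeval l Q) φ' where
  isHomogeneous := by simpa using h.isHomogeneous.aeval l hl
  natDegree_le i := by
    simpa [hφ'] using aeval_natDegree_le (a i) (ha i).totalDegree_le φ h.natDegree_le
  dvd {d f} hf h₀ := by
    have hQ : Q ∣ aeval a f := by
      refine h.dvd (by simpa using hf.aeval a ha) ?_
      rw [← h₀, ← AlgHom.comp_apply, comp_aeval, funext hφ']
    have hcomp : aeval l (aeval a f) = C c ^ d * f := by
      rw [← AlgHom.comp_apply, comp_aeval, funext hal]
      exact (aeval_smul_of_isHomogeneous hf (C c) X).trans (by rw [aeval_X_left_apply])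
    refine ((hc.isUnit.map C).pow d).dvd_mul_left.mp ?_
    exact hcomp ▸ map_dvd (aeval l) hQ

end ParametrizedCurves

section Peeling

theorem exists_isHomogeneous_of_dvd {σ R : Type*} [CommRing R] {d e : ℕ} {f Q : MvPolynomial σ R}
    (hf : f.IsHomogeneous (d + e)) (hQ : Q.IsHomogeneous e) (h : Q ∣ f) :
    ∃ g : MvPolynomial σ R, g.IsHomogeneous d ∧ f = g * Q := by
  obtain ⟨g, rfl⟩ := h
  rw [mul_comm Q] at hf ⊢
  let := weightedGradedAlgebra R (1 : σ → ℕ)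
  let c := DirectSum.decompose (weightedHomogeneousSubmodule R 1) g d
  refine ⟨c, c.2, ?_⟩
  rw [← DirectSum.coe_decompose_mul_add_of_right_mem _ hQ]
  exact (DirectSum.decompose_of_mem_same _ hf).symm

theorem finrank_le_of_dvd_of_natDegree_lt {K : Type*} [Field K] {W : Submodule K (Polynomial K)}
    {D : Polynomial K} (r : ℕ) (hW : ∀ f ∈ W, D ∣ f ∧ f.natDegree < D.natDegree + r) :
    Module.finrank K W ≤ r := by
  have e := Polynomial.degreeLTEquiv K r
  have := Module.Finite.equiv e.symm
  suffices W ≤ (Polynomial.degreeLT K r).map (LinearMap.mulLeft K D) from calc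
    Module.finrank K W ≤ _ := Submodule.finrank_mono this
    _ ≤ Module.finrank K (Polynomial.degreeLT K r) := Submodule.finrank_map_le _ _
    _ = r := by rw [e.finrank_eq, Module.finrank_fin_fun]
  intro f hf
  obtain ⟨⟨g, rfl⟩, hdeg⟩ := hW f hf
  by_cases h : D * g = 0
  · exact h ▸ zero_mem _
  · refine ⟨g, Polynomial.mem_degreeLT.mpr ?_, rfl⟩
    rw [mul_eq_zero, not_or] at h
    rw [Polynomial.natDegree_mul h.1 h.2, add_lt_add_iff_left] at hdeg
    exact Polynomial.natDegree_lt_iff_degree_lt h.2 |>.mp hdeg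

theorem prod_X_sub_C_pow_dvd {ι K : Type*} [Field K] {s : Finset ι} {t : ι → K}
    (ht : Set.InjOn t s) {m : ι → ℕ} {f : Polynomial K}
    (h : ∀ i ∈ s, (Polynomial.X - Polynomial.C (t i)) ^ m i ∣ f) :
    ∏ i ∈ s, (Polynomial.X - Polynomial.C (t i)) ^ m i ∣ f :=
  Finset.prod_dvd_of_coprime (fun _ hi _ hj hij => (Polynomial.isCoprime_X_sub_C_of_isUnit_sub
    (sub_ne_zero.mpr (ht.ne hi hj hij)).isUnit).pow) h

theorem natDegree_prod_X_sub_C_pow {ι R : Type*} [CommRing R] [Nontrivial R] (s : Finset ι)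
    (t : ι → R) (m : ι → ℕ) :
    (∏ i ∈ s, (Polynomial.X - Polynomial.C (t i)) ^ m i).natDegree = ∑ i ∈ s, m i := by
  rw [Polynomial.natDegree_prod_of_monic _ _ fun i _ => (Polynomial.monic_X_sub_C _).pow _]
  simp [(Polynomial.monic_X_sub_C _).natDegree_pow]

variable {k d d' e r : ℕ} {Q : MvPolynomial (Fin 3) ℂ} {φ : Fin 3 → Polynomial ℂ}
  {p : Fin k → Fin 3 → ℂ} {m m' n : Fin k → ℕ} {s : Finset (Fin k)}

theorem IsParametrization.finrank_map_linSys_le (h : IsParametrization e Q φ) {t c : Fin k → ℂ}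
    (ht : Set.InjOn t s) (hp : ∀ i ∈ s, ∀ j, (φ j).eval (t i) = c i * p i j)
    (hr : d * e < ∑ i ∈ s, m i + r) :
    Module.finrank ℂ ((linSys p d m).map (aeval φ).toLinearMap) ≤ r := by
  refine finrank_le_of_dvd_of_natDegree_lt
    (D := ∏ i ∈ s, (Polynomial.X - Polynomial.C (t i)) ^ m i) r ?_
  rintro _ ⟨f, hf, rfl⟩
  rw [SetLike.mem_coe, mem_linSys_iff] at hf
  refine ⟨prod_X_sub_C_pow_dvd ht fun i hi => VanishesToOrder.X_sub_C_pow_dvd φ (t i) ?_, ?_⟩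
  · rw [show (fun j => (φ j).eval (t i)) = c i • p i from funext (hp i hi)]
    exact (hf.2 i).smul hf.1 (c i)
  · rw [natDegree_prod_X_sub_C_pow]
    exact (aeval_natDegree_le f hf.1.totalDegree_le φ h.natDegree_le).trans_lt hr

theorem IsParametrization.linSys_inf_ker_le (h : IsParametrization e Q φ)
    (hn : ∀ i, ¬ VanishesToOrder (p i) (n i + 1) Q) :
    linSys p (d + e) m ⊓ LinearMap.ker (aeval φ).toLinearMap ≤
      (linSys p d (m - n)).map (LinearMap.mulRight ℂ Q) := by
  rintro f ⟨hf, hker⟩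
  rw [SetLike.mem_coe, mem_linSys_iff] at hf
  obtain ⟨g, hg, rfl⟩ := exists_isHomogeneous_of_dvd hf.1 h.isHomogeneous (h.dvd hf.1 hker)
  exact ⟨g, mem_linSys_iff.mpr ⟨hg, fun i => .of_mul_right (hn i) (hf.2 i)⟩, rfl⟩

theorem IsParametrization.projDim_le_add (h : IsParametrization e Q φ) {t c : Fin k → ℂ}
    (ht : Set.InjOn t s) (hp : ∀ i ∈ s, ∀ j, (φ j).eval (t i) = c i * p i j)
    (hn : ∀ i, ¬ VanishesToOrder (p i) (n i + 1) Q) (hr : (d + e) * e < ∑ i ∈ s, m i + r) :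
    projDim p (d + e) m ≤ projDim p d (m - n) + r := by
  have hrange := h.finrank_map_linSys_le ht hp hr
  have hker := (Submodule.finrank_mono (h.linSys_inf_ker_le (d := d) (m := m) hn)).trans
    (Submodule.finrank_map_le _ _)
  have rank_nullity := ((aeval φ).toLinearMap.domRestrict
    (linSys p (d + e) m)).finrank_range_add_finrank_ker
  rw [LinearMap.range_domRestrict, LinearMap.ker_domRestrict,
    ← Submodule.finrank_map_subtype_eq, Submodule.map_comap_subtype] at rank_nullity
  simp only [projDim]
  lia

/-- Some irreducible rational curve of degree `e` contains precisely the points `p i`, `i ∈ s`, of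
the configuration `p`, and these are distinct smooth points of the curve. The homogeneous
coordinates of `p i` may differ from those given by the parametrisation by a factor. -/
def OnRationalCurve (e : ℕ) (p : Fin k → Fin 3 → ℂ) (s : Finset (Fin k)) : Prop :=
  ∃ (Q : MvPolynomial (Fin 3) ℂ) (φ : Fin 3 → Polynomial ℂ) (t c : Fin k → ℂ),
    IsParametrization e Q φ ∧ Set.InjOn t s ∧ (∀ i ∈ s, ∀ j, (φ j).eval (t i) = c i * p i j) ∧
      (∀ i ∈ s, ∃ j, aeval (p i) (pderiv j Q) ≠ 0) ∧ ∀ i ∉ s, aeval (p i) Q ≠ 0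

theorem OnRationalCurve.projDim_le (h : OnRationalCurve e p s) {v w : ℤ}
    (hv : projDim p d' m' ≤ v) (hvw : v ≤ w := by decide) (hd : d = d' + e := by decide)
    (hm : ∀ i, m' i = m i - if i ∈ s then 1 else 0 := by decide)
    (hw : (d * e : ℤ) + v < ∑ i ∈ s, (m i : ℤ) + w := by decide) : projDim p d m ≤ w := by
  obtain ⟨Q, φ, t, c, hφ, ht, hp, smooth, avoids⟩ := h
  obtain ⟨r, rfl⟩ := Int.le.dest hvw
  obtain rfl := hd
  obtain rfl : m' = m - fun i => if i ∈ s then 1 else 0 := funext hm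
  suffices projDim p (d' + e) m ≤ projDim p d' (m - fun i => if i ∈ s then 1 else 0) + r by lia
  refine hφ.projDim_le_add ht hp (fun i => ?_) (by zify at hw ⊢; linarith)
  by_cases hi : i ∈ s
  · obtain ⟨j, hj⟩ := smooth i hi
    rw [if_pos hi, vanishesToOrder_succ_iff]
    exact fun h => hj (vanishesToOrder_one_iff.mp (h.2 j))
  · rw [if_neg hi, vanishesToOrder_one_iff]
    exact avoids i hi

end Peeling

section SpecialSystems

theorem projDim_le_projDim_add_nsmul_of_virtDim_nonneg {k d e : ℕ} {m μ : Fin k → ℕ}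
    (p : Fin k → Fin 3 → ℂ) (hμ : ∀ i, μ i ≤ e + 1) (h : 0 ≤ virtDim e μ) (n : ℕ) :
    projDim p d m ≤ projDim p (d + n * e) (m + n • μ) :=
  projDim_le_projDim_add_nsmul (h.trans (virtDim_le_projDim p hμ)) n

theorem le_projDim_10_6_6 (p : Fin 3 → Fin 3 → ℂ) : 24 ≤ projDim p 10 (qh 2 0) := by
  rw [show qh 2 0 = ![0, 4, 4] + 2 • ![0, 1, 1] by decide]
  calc 24 = virtDim 8 ![0, 4, 4] := by decide
    _ ≤ projDim p 8 ![0, 4, 4] := virtDim_le_projDim p (by decide)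
    _ ≤ projDim p (8 + 2 * 1) _ :=
      projDim_le_projDim_add_nsmul_of_virtDim_nonneg p (by decide) (by decide) 2

theorem le_projDim_12_2_6_6_6_6 (p : Fin 5 → Fin 3 → ℂ) : 4 ≤ projDim p 12 (qh 4 2) := by
  rw [show qh 4 2 = ![0, 4, 4, 4, 4] + 2 • ![1, 1, 1, 1, 1] by decide]
  calc 4 = virtDim 8 ![0, 4, 4, 4, 4] := by decide
    _ ≤ projDim p 8 ![0, 4, 4, 4, 4] := virtDim_le_projDim p (by decide)
    _ ≤ projDim p (8 + 2 * 2) _ :=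
      projDim_le_projDim_add_nsmul_of_virtDim_nonneg p (by decide) (by decide) 2

theorem le_projDim_10_6_6_6 (p : Fin 4 → Fin 3 → ℂ) : 5 ≤ projDim p 10 (qh 3 0) := by
  rw [show qh 3 0 =
    ![0, 2, 2, 2] + 2 • ![0, 1, 1, 0] + 2 • ![0, 1, 0, 1] + 2 • ![0, 0, 1, 1] by decide]
  have add_line {d : ℕ} {m μ : Fin 4 → ℕ} (hμ : ∀ i, μ i ≤ 2) (h : 0 ≤ virtDim 1 μ) :
      projDim p d m ≤ projDim p (d + 2 * 1) (m + 2 • μ) :=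
    projDim_le_projDim_add_nsmul_of_virtDim_nonneg p hμ h 2
  calc 5 = virtDim 4 ![0, 2, 2, 2] := by decide
    _ ≤ projDim p 4 ![0, 2, 2, 2] := virtDim_le_projDim p (by decide)
    _ ≤ projDim p 6 _ := add_line (by decide) (by decide)
    _ ≤ projDim p 8 _ := add_line (by decide) (by decide)
    _ ≤ projDim p 10 _ := add_line (by decide) (by decide)

theorem le_projDim_14_4_6_6_6_6_6 (p : Fin 6 → Fin 3 → ℂ) : 5 ≤ projDim p 14 (qh 5 4) := by
  rw [show qh 5 4 = ![4, 4, 4, 4, 4, 4] + 2 • ![0, 1, 1, 1, 1, 1] by decide]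
  calc 5 = virtDim 10 ![4, 4, 4, 4, 4, 4] := by decide
    _ ≤ projDim p 10 ![4, 4, 4, 4, 4, 4] := virtDim_le_projDim p (by decide)
    _ ≤ projDim p (10 + 2 * 2) _ :=
      projDim_le_projDim_add_nsmul_of_virtDim_nonneg p (by decide) (by decide) 2

theorem projDim_10_6_6_le {p : Fin 3 → Fin 3 → ℂ} (line : OnRationalCurve 1 p {1, 2}) :
    projDim p 10 (qh 2 0) ≤ 24 := by
  have h₄ : projDim p 4 ![0, 0, 0] ≤ 14 :=
    (projDim_le_virtDim_zero p 4 _).trans (by decide)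
  have h₅ : projDim p 5 ![0, 1, 1] ≤ 18 := line.projDim_le h₄
  have h₆ : projDim p 6 ![0, 2, 2] ≤ 21 := line.projDim_le h₅
  have h₇ : projDim p 7 ![0, 3, 3] ≤ 23 := line.projDim_le h₆
  have h₈ : projDim p 8 ![0, 4, 4] ≤ 24 := line.projDim_le h₇
  have h₉ : projDim p 9 ![0, 5, 5] ≤ 24 := line.projDim_le h₈
  exact line.projDim_le h₉

theorem projDim_12_2_6_6_6_6_le {p : Fin 5 → Fin 3 → ℂ}
    (conic : OnRationalCurve 2 p Finset.univ) : projDim p 12 (qh 4 2) ≤ 4 := by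
  have h₀ : projDim p 0 ![0, 0, 0, 0, 0] ≤ 0 :=
    (projDim_le_virtDim_zero p 0 _).trans (by decide)
  have h₂ : projDim p 2 ![0, 1, 1, 1, 1] ≤ 1 := conic.projDim_le h₀
  have h₄ : projDim p 4 ![0, 2, 2, 2, 2] ≤ 2 := conic.projDim_le h₂
  have h₆ : projDim p 6 ![0, 3, 3, 3, 3] ≤ 3 := conic.projDim_le h₄
  have h₈ : projDim p 8 ![0, 4, 4, 4, 4] ≤ 4 := conic.projDim_le h₆
  have h₁₀ : projDim p 10 ![1, 5, 5, 5, 5] ≤ 4 := conic.projDim_le h₈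
  exact conic.projDim_le h₁₀

theorem projDim_10_6_6_6_le {p : Fin 4 → Fin 3 → ℂ} (line₁₂ : OnRationalCurve 1 p {1, 2})
    (line₁₃ : OnRationalCurve 1 p {1, 3}) (line₂₃ : OnRationalCurve 1 p {2, 3}) :
    projDim p 10 (qh 3 0) ≤ 5 := by
  have h₁ : projDim p 1 ![0, 0, 0, 0] ≤ 2 :=
    (projDim_le_virtDim_zero p 1 _).trans (by decide)
  have h₂ : projDim p 2 ![0, 0, 1, 1] ≤ 3 := line₂₃.projDim_le h₁
  have h₃ : projDim p 3 ![0, 1, 1, 2] ≤ 4 := line₁₃.projDim_le h₂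
  have h₄ : projDim p 4 ![0, 2, 2, 2] ≤ 5 := line₁₂.projDim_le h₃
  have h₅ : projDim p 5 ![0, 2, 3, 3] ≤ 5 := line₂₃.projDim_le h₄
  have h₆ : projDim p 6 ![0, 2, 4, 4] ≤ 5 := line₂₃.projDim_le h₅
  have h₇ : projDim p 7 ![0, 3, 4, 5] ≤ 5 := line₁₃.projDim_le h₆
  have h₈ : projDim p 8 ![0, 4, 4, 6] ≤ 5 := line₁₃.projDim_le h₇
  have h₉ : projDim p 9 ![0, 5, 5, 6] ≤ 5 := line₁₂.projDim_le h₈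
  exact line₁₂.projDim_le h₉

theorem projDim_14_4_6_6_6_6_6_le {p : Fin 6 → Fin 3 → ℂ} (line : OnRationalCurve 1 p {0, 1})
    (conic₀ : OnRationalCurve 2 p {1, 2, 3, 4, 5})
    (conic₁ : OnRationalCurve 2 p {0, 2, 3, 4, 5}) : projDim p 14 (qh 5 4) ≤ 5 := by
  have h₀ : projDim p 0 ![0, 0, 0, 0, 0, 0] ≤ 0 :=
    (projDim_le_virtDim_zero p 0 _).trans (by decide)
  have h₂ : projDim p 2 ![1, 0, 1, 1, 1, 1] ≤ 0 := conic₁.projDim_le h₀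
  have h₄ : projDim p 4 ![1, 1, 2, 2, 2, 2] ≤ 0 := conic₀.projDim_le h₂
  have h₅ : projDim p 5 ![2, 2, 2, 2, 2, 2] ≤ 2 := line.projDim_le h₄
  have h₇ : projDim p 7 ![3, 2, 3, 3, 3, 3] ≤ 2 := conic₁.projDim_le h₅
  have h₉ : projDim p 9 ![3, 3, 4, 4, 4, 4] ≤ 2 := conic₀.projDim_le h₇
  have h₁₀ : projDim p 10 ![4, 4, 4, 4, 4, 4] ≤ 5 := line.projDim_le h₉
  have h₁₂ : projDim p 12 ![4, 5, 5, 5, 5, 5] ≤ 5 := conic₀.projDim_le h₁₀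
  exact conic₀.projDim_le h₁₂

theorem IsParametrization.line_of_involution {K : Type*} [Field K]
    {l : Fin 3 → MvPolynomial (Fin 3) K} {φ : Fin 3 → Polynomial K}
    (hl : ∀ i, (l i).IsHomogeneous 1) (h : ∀ i, aeval l (l i) = X i)
    (hφ : ∀ i, φ i = aeval ![1, Polynomial.X, 0] (l i)) : IsParametrization 1 (l 2) φ := by
  simpa using (isParametrization_line K).linearChange hl hl one_ne_zero (by simpa using h) hφ

theorem isParametrization_X_one (K : Type*) [Field K] :
    IsParametrization 1 (X 1 : MvPolynomial (Fin 3) K) ![1, 0, Polynomial.X] :=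
  .line_of_involution (l := ![X 0, X 2, X 1]) (by simp [Fin.forall_fin_succ, isHomogeneous_X])
    (by simp [Fin.forall_fin_succ]) (by simp [Fin.forall_fin_succ])

theorem isParametrization_X_sub_X_sub_X (K : Type*) [Field K] :
    IsParametrization 1 (X 0 - X 1 - X 2 : MvPolynomial (Fin 3) K)
      ![1, Polynomial.X, 1 - Polynomial.X] := by
  simpa using IsParametrization.line_of_involution (l := ![X 0, X 1, X 0 - X 1 - X 2])
    (by simp [Fin.forall_fin_succ, isHomogeneous_X, IsHomogeneous.sub])
    (by simp [Fin.forall_fin_succ]) (by simp [Fin.forall_fin_succ])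

theorem exists_onRationalCurve_line :
    ∃ p : Fin 3 → Fin 3 → ℂ, OnRationalCurve 1 p {1, 2} :=
  ⟨![![0, 0, 1], ![1, 0, 0], ![1, 1, 0]], _, _, ![0, 0, 1], 1, isParametrization_line ℂ,
    by simp [Set.InjOn], by simp [Fin.forall_fin_succ], by simp [Fin.exists_fin_succ, pderiv_X],
    by simp [Fin.forall_fin_succ]⟩

theorem exists_onRationalCurve_conic :
    ∃ p : Fin 5 → Fin 3 → ℂ, OnRationalCurve 2 p Finset.univ :=
  ⟨![![1, 0, 0], ![1, 1, 1], ![1, 2, 4], ![1, 3, 9], ![1, 4, 16]], _, _, ![0, 1, 2, 3, 4], 1,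
    isParametrization_conic ℂ, by simp [Set.InjOn, Fin.forall_fin_succ],
    by simp [Fin.forall_fin_succ]; norm_num,
    by simp [Fin.forall_fin_succ, Fin.exists_fin_succ, pderiv_X], by simp⟩

theorem exists_onRationalCurve_triangle : ∃ p : Fin 4 → Fin 3 → ℂ,
    OnRationalCurve 1 p {1, 2} ∧ OnRationalCurve 1 p {1, 3} ∧ OnRationalCurve 1 p {2, 3} :=
  ⟨![![1, 1, 1], ![1, 0, 0], ![1, 1, 0], ![1, 0, 1]],
    ⟨_, _, ![0, 0, 1, 0], 1, isParametrization_line ℂ, by simp [Set.InjOn],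
      by simp [Fin.forall_fin_succ], by simp [Fin.exists_fin_succ, pderiv_X],
      by simp [Fin.forall_fin_succ]⟩,
    ⟨_, _, ![0, 0, 0, 1], 1, isParametrization_X_one ℂ, by simp [Set.InjOn],
      by simp [Fin.forall_fin_succ], by simp [Fin.exists_fin_succ, pderiv_X],
      by simp [Fin.forall_fin_succ]⟩,
    ⟨_, _, ![0, 0, 1, 0], 1, isParametrization_X_sub_X_sub_X ℂ, by simp [Set.InjOn],
      by simp [Fin.forall_fin_succ], by simp [Fin.exists_fin_succ, pderiv_X],
      by simp [Fin.forall_fin_succ]⟩⟩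

/-- The conic through `(1, 0, -4)` and the points `(1, ±1, 1)`, `(1, ±2, 4)` of the conic
`X 0 * X 2 = X 1 ^ 2`, with a parametrisation taking these points at `0`, `±5`, `±4`. -/
theorem isParametrization_conic_of_thirty_ne_zero {K : Type*} [Field K] (h : (30 : K) ≠ 0) :
    IsParametrization 2
      ((X 0 + X 2) * (C 40 * X 0 + C 10 * X 2) - (C 10 * X 1) ^ 2 : MvPolynomial (Fin 3) K)
      ![Polynomial.X ^ 2 - 10, 3 * Polynomial.X, 40 - Polynomial.X ^ 2] := by
  simpa using (isParametrization_conic K).linearChange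
    (a := ![X 2 - C 10 * X 0, C 3 * X 1, C 40 * X 0 - X 2])
    (l := ![X 0 + X 2, C 10 * X 1, C 40 * X 0 + C 10 * X 2])
    (by simp [Fin.forall_fin_succ, isHomogeneous_X, isHomogeneous_C_mul_X, IsHomogeneous.sub])
    (by simp [Fin.forall_fin_succ, isHomogeneous_X, isHomogeneous_C_mul_X, IsHomogeneous.add]) h
    (fun i => by fin_cases i <;> simp [map_ofNat] <;> ring)
    (by simp [Fin.forall_fin_succ, map_ofNat])

theorem exists_onRationalCurve_line_conic_conic : ∃ p : Fin 6 → Fin 3 → ℂ,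
    OnRationalCurve 1 p {0, 1} ∧ OnRationalCurve 2 p {1, 2, 3, 4, 5} ∧
      OnRationalCurve 2 p {0, 2, 3, 4, 5} :=
  ⟨![![1, 0, -4], ![1, 0, 0], ![1, 1, 1], ![1, -1, 1], ![1, 2, 4], ![1, -2, 4]],
    ⟨_, _, ![-4, 0, 0, 0, 0, 0], 1, isParametrization_X_one ℂ, by simp [Set.InjOn],
      by simp [Fin.forall_fin_succ], by simp [Fin.exists_fin_succ, pderiv_X],
      by simp [Fin.forall_fin_succ]⟩,
    ⟨_, _, ![0, 0, 1, -1, 2, -2], 1, isParametrization_conic ℂ, by simp [Set.InjOn]; norm_num,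
      by simp [Fin.forall_fin_succ]; norm_num, by simp [Fin.exists_fin_succ, pderiv_X],
      by simp [Fin.forall_fin_succ]⟩,
    ⟨_, _, ![0, 0, 5, -5, 4, -4], ![-10, 0, 15, 15, 6, 6],
      isParametrization_conic_of_thirty_ne_zero (by norm_num), by simp [Set.InjOn]; norm_num,
      by simp [Fin.forall_fin_succ]; norm_num,
      by simp [Fin.exists_fin_succ, pderiv_X]; norm_num,
      by simp [Fin.forall_fin_succ]⟩⟩

theorem Generically.projDim_eq {k d : ℕ} {m : Fin k → ℕ} {v : ℤ} (hm : ∀ i, m i ≤ d + 1)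
    (hv : max (-1) (virtDim d m) < v) (lower : ∀ p, v ≤ projDim p d m)
    (upper : ∃ q, projDim q d m ≤ v) :
    Generically k fun p => projDim p d m = v ∧ projDim p d m > max (-1) (virtDim d m) := by
  obtain ⟨q, hq⟩ := upper
  obtain ⟨P, hP, hgen⟩ := generically_projDim_le hm q
  refine ⟨P, hP, fun p hp hpP => ?_⟩
  have h := ((hgen p hp hpP).trans hq).antisymm (lower p)
  exact ⟨h, hv.trans_eq h.symm⟩

end SpecialSystems

theorem special_L_2e_family_and_sporadic :
    (∀ e : ℕ, 1 ≤ e → e ≤ 2 →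
      virtDim (2 * e + 8) (qh (2 * e) (2 * e - 2)) = -20 * (e : ℤ) + 43 ∧
      Generically (2 * e + 1) (fun p =>
        projDim p (2 * e + 8) (qh (2 * e) (2 * e - 2)) = 44 - 20 * (e : ℤ) ∧
        projDim p (2 * e + 8) (qh (2 * e) (2 * e - 2)) >
          max (-1) (virtDim (2 * e + 8) (qh (2 * e) (2 * e - 2))))) ∧
    (virtDim 10 (qh 3 0) = 2 ∧
      Generically 4 (fun p =>
        projDim p 10 (qh 3 0) = 5 ∧
        projDim p 10 (qh 3 0) > max (-1) (virtDim 10 (qh 3 0)))) ∧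
    (virtDim 14 (qh 5 4) = 4 ∧
      Generically 6 (fun p =>
        projDim p 14 (qh 5 4) = 5 ∧
        projDim p 14 (qh 5 4) > max (-1) (virtDim 14 (qh 5 4)))) := by
  refine ⟨fun e he he' => ?_, ⟨by decide, ?_⟩, by decide, ?_⟩
  · interval_cases e
    · obtain ⟨p, line⟩ := exists_onRationalCurve_line
      exact ⟨by decide, .projDim_eq (by decide) (by decide) le_projDim_10_6_6
        ⟨p, projDim_10_6_6_le line⟩⟩
    · obtain ⟨p, conic⟩ := exists_onRationalCurve_conic
      exact ⟨by decide, .projDim_eq (by decide) (by decide) le_projDim_12_2_6_6_6_6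
        ⟨p, projDim_12_2_6_6_6_6_le conic⟩⟩
  · obtain ⟨p, line₁₂, line₁₃, line₂₃⟩ := exists_onRationalCurve_triangle
    exact .projDim_eq (by decide) (by decide) le_projDim_10_6_6_6
      ⟨p, projDim_10_6_6_6_le line₁₂ line₁₃ line₂₃⟩
  · obtain ⟨p, line, conic₀, conic₁⟩ := exists_onRationalCurve_line_conic_conic
    exact .projDim_eq (by decide) (by decide) le_projDim_14_4_6_6_6_6_6
      ⟨p, projDim_14_4_6_6_6_6_6_le line conic₀ conic₁⟩
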